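/- Let (w_+, w_-) ∈ W × W with (w_+, w_-) ≠ (w_0, w_0). Then the 𝓗-invariant prime ideal Q_{w_+,w_-} of O_q(G) contains either one of the elements c^{ϖ_i}_{−ϖ_i, w_0ϖ_i} or one of the elements c^{ϖ_i}_{−w_0ϖ_i, ϖ_i}, for some i ∈ {1,…,n}. -/

import Mathlib

open scoped TensorProduct

/-- The `q`-factorial `(q - q⁻¹)(q² - q⁻²)⋯(qᵐ - q⁻ᵐ)`. -/
noncomputable def qfac (t : ℂ) (m : ℕ) : ℂ :=
  ∏ j ∈ Finset.range m, (t ^ (j + 1) - t⁻¹ ^ (j + 1))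

/-- The `q`-binomial coefficient `[m k]` at parameter `t`. -/
noncomputable def qbinom (t : ℂ) (m k : ℕ) : ℂ :=
  qfac t m / (qfac t k * qfac t (m - k))

/-- The defining relations of the quantised enveloping algebra `U_q(𝔤)` associated to a
Cartan matrix `a` with symmetrising integers `d`, on elements `E i`, `F i`, `K i` of a
`ℂ`-algebra `B`: the `K i` are commuting units, conjugation by `K i` rescales `E j` and
`F j` by `q_i^{±a i j}` (where `q_i = q^{d i}`), the commutator `[E i, F j]` is
`δ_{ij} (K_i - K_i⁻¹)/(q_i - q_i⁻¹)`, and the quantum Serre relations hold. -/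
def UqRels (q : ℂ) {n : ℕ} (a : Fin n → Fin n → ℤ) (d : Fin n → ℕ)
    (B : Type) [Ring B] [Algebra ℂ B] (E F : Fin n → B) (K : Fin n → Bˣ) : Prop :=
  (∀ i j, (K i : B) * (K j : B) = (K j : B) * (K i : B)) ∧
  (∀ i j, (K i : B) * E j = (q ^ ((d i : ℤ) * a i j)) • (E j * (K i : B))) ∧
  (∀ i j, (K i : B) * F j = (q ^ (-((d i : ℤ) * a i j))) • (F j * (K i : B))) ∧
  (∀ i j, E i * F j - F j * E i =
    if i = j then (q ^ (d i : ℤ) - q ^ (-(d i : ℤ)))⁻¹ • ((K i : B) - (((K i)⁻¹ : Bˣ) : B))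
    else 0) ∧
  (∀ i j, i ≠ j → ∑ k ∈ Finset.range ((1 - a i j).toNat + 1),
      ((-1 : ℂ) ^ k * qbinom (q ^ (d i : ℤ)) ((1 - a i j).toNat) k) •
        (E i ^ ((1 - a i j).toNat - k) * E j * E i ^ k) = 0) ∧
  (∀ i j, i ≠ j → ∑ k ∈ Finset.range ((1 - a i j).toNat + 1),
      ((-1 : ℂ) ^ k * qbinom (q ^ (d i : ℤ)) ((1 - a i j).toNat) k) •
        (F i ^ ((1 - a i j).toNat - k) * F j * F i ^ k) = 0)

/-- The weight space of weight `μ = ∑ μ i ϖ i` in a `U_q(𝔤)`-module: the set of vectors on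
which each `K i` acts by the scalar `q^{(μ, α_i)} = q^{μ i * d i}`. -/
noncomputable def wtSp (q : ℂ) {n : ℕ} (d : Fin n → ℕ)
    {U : Type} [Ring U] [Algebra ℂ U] (K : Fin n → Uˣ)
    {Vc : Type} [AddCommGroup Vc] [Module ℂ Vc] (ρ : U →ₐ[ℂ] Module.End ℂ Vc)
    (μ : Fin n → ℤ) : Submodule ℂ Vc :=
  ⨅ i : Fin n, LinearMap.ker (ρ (K i : U) - (q ^ (μ i * (d i : ℤ))) • (1 : Module.End ℂ Vc))

/-- `ξ` is a dual vector of weight `μ`:  equivalently (via the antipode-twisted action on the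
dual module), `ξ` vanishes on every weight space of weight `ν ≠ -μ`. -/
noncomputable def inDualWt (q : ℂ) {n : ℕ} (d : Fin n → ℕ)
    {U : Type} [Ring U] [Algebra ℂ U] (K : Fin n → Uˣ)
    {Vc : Type} [AddCommGroup Vc] [Module ℂ Vc] (ρ : U →ₐ[ℂ] Module.End ℂ Vc)
    (μ : Fin n → ℤ) (ξ : Module.Dual ℂ Vc) : Prop :=
  ∀ ν : Fin n → ℤ, ν ≠ -μ → ∀ x ∈ wtSp q d K ρ ν, ξ x = 0

/-- The Demazure-type submodule generated by the weight space of weight `ν` under the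
subalgebra of `U` generated by `gens` (take `gens = Set.range E` for `V⁺_w(λ)` with
`ν = wλ`, and `gens = Set.range F` for `V⁻_w(λ)`). -/
noncomputable def demazure (q : ℂ) {n : ℕ} (d : Fin n → ℕ)
    {U : Type} [Ring U] [Algebra ℂ U] (gens : Set U) (K : Fin n → Uˣ)
    {Vc : Type} [AddCommGroup Vc] [Module ℂ Vc] (ρ : U →ₐ[ℂ] Module.End ℂ Vc)
    (ν : Fin n → ℤ) : Submodule ℂ Vc :=
  Submodule.span ℂ
    {x | ∃ y ∈ Algebra.adjoin ℂ gens, ∃ u ∈ wtSp q d K ρ ν, x = ρ y u}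

/-- A two-sided ideal of a (possibly noncommutative) ring is prime if it is proper and
`x R y ⊆ P` implies `x ∈ P` or `y ∈ P`. -/
def IsPrimeTwoSided {R : Type*} [Ring R] (P : TwoSidedIdeal R) : Prop :=
  P ≠ ⊤ ∧ ∀ x y : R, (∀ r : R, x * r * y ∈ P) → x ∈ P ∨ y ∈ P

/-- An element `r` of a ring is normal if `rR = Rr`. -/
def IsNormalElem {R : Type*} [Ring R] (r : R) : Prop :=
  (∀ x, ∃ y, r * x = y * r) ∧ ∀ x, ∃ y, x * r = r * y

/-- The ideal `Q⁺_{w}` of `O_q(G)`: generated by the coordinate functions `c^{ϖ_j}_{ξ,v}` with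
`v` a highest weight vector of `V(ϖ_j)` and `ξ` orthogonal to the Demazure module
`V⁺_w(ϖ_j)`. -/
noncomputable def Qplus (q : ℂ) {n : ℕ} (d : Fin n → ℕ)
    {U : Type} [Ring U] [Algebra ℂ U] (E : Fin n → U) (K : Fin n → Uˣ)
    {V : (Fin n → ℕ) → Type} [∀ c, AddCommGroup (V c)] [∀ c, Module ℂ (V c)]
    (ρ : ∀ c, U →ₐ[ℂ] Module.End ℂ (V c))
    {W : Type} [Group W] (σ : W →* Multiplicative (AddAut (Fin n → ℤ)))
    {A : Type} [Ring A]
    (cf : ∀ c : Fin n → ℕ, Module.Dual ℂ (V c) → V c → A)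
    (w : W) : TwoSidedIdeal A :=
  TwoSidedIdeal.span
    {x | ∃ j : Fin n, ∃ ξ : Module.Dual ℂ (V (Pi.single j 1)),
      ∃ v ∈ wtSp q d K (ρ (Pi.single j 1)) (fun k => ((Pi.single j 1 : Fin n → ℕ) k : ℤ)),
        (∀ y ∈ demazure q d (Set.range E) K (ρ (Pi.single j 1))
            (σ w (fun k => ((Pi.single j 1 : Fin n → ℕ) k : ℤ))), ξ y = 0) ∧
        x = cf (Pi.single j 1) ξ v}

/-- The ideal `Q⁻_{w}` of `O_q(G)`: generated by the coordinate functions `c^{ϖ_j}_{ξ,v}` with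
`v` a lowest weight vector of `V(ϖ_j)` and `ξ` orthogonal to the Demazure module
`V⁻_{w w₀}(ϖ_j)`. -/
noncomputable def Qminus (q : ℂ) {n : ℕ} (d : Fin n → ℕ)
    {U : Type} [Ring U] [Algebra ℂ U] (F : Fin n → U) (K : Fin n → Uˣ)
    {V : (Fin n → ℕ) → Type} [∀ c, AddCommGroup (V c)] [∀ c, Module ℂ (V c)]
    (ρ : ∀ c, U →ₐ[ℂ] Module.End ℂ (V c))
    {W : Type} [Group W] (σ : W →* Multiplicative (AddAut (Fin n → ℤ))) (w₀ : W)
    {A : Type} [Ring A]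
    (cf : ∀ c : Fin n → ℕ, Module.Dual ℂ (V c) → V c → A)
    (w : W) : TwoSidedIdeal A :=
  TwoSidedIdeal.span
    {x | ∃ j : Fin n, ∃ ξ : Module.Dual ℂ (V (Pi.single j 1)),
      ∃ v ∈ wtSp q d K (ρ (Pi.single j 1)) (σ w₀ (fun k => ((Pi.single j 1 : Fin n → ℕ) k : ℤ))),
        (∀ y ∈ demazure q d (Set.range F) K (ρ (Pi.single j 1))
            (σ (w * w₀) (fun k => ((Pi.single j 1 : Fin n → ℕ) k : ℤ))), ξ y = 0) ∧
        x = cf (Pi.single j 1) ξ v}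


/-!
The weights of `V(λ)` lie in `λ - Q⁺`, and `wλ` is one of them, so `wλ ≤ λ` in the dominance order
for every dominant `λ`. Since Weyl orbits sum to zero, this makes the simple roots linearly
independent, so that the dominance order is antisymmetric and `wλ` is never strictly below `w₀λ`.
The weights of `V^±_w(ϖ_i)` lie in `wϖ_i ± Q⁺`; hence if `w₊ϖ_i ≠ w₀ϖ_i`, then `V⁺_{w₊}(ϖ_i)` has
no component of weight `w₀ϖ_i`, and dually if `w₋w₀ϖ_i ≠ ϖ_i`, then `V⁻_{w₋w₀}(ϖ_i)` has none of
weight `ϖ_i`. The required coordinate functions are then themselves generators of the ideal.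
-/

section WeightLattice

open scoped Matrix

variable {n : ℕ} {a : Fin n → Fin n → ℤ}

/-- The fundamental weight `ϖ i`, in the coordinates `μ = ∑ μ i ϖ i` of the weight lattice. -/
def fundWt (i : Fin n) : Fin n → ℤ := fun k => ((Pi.single i 1 : Fin n → ℕ) k : ℤ)

/-- The simple root `α_j`: its coordinates in the basis of fundamental weights form the `j`-th
column of the Cartan matrix. -/
def simpleRoot (a : Fin n → Fin n → ℤ) (j : Fin n) : Fin n → ℤ := fun k => a k j

/-- The positive cone `Q⁺` of the root lattice; in the dominance order `μ ≤ ν` means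
`ν - μ ∈ Q⁺`. -/
def rootCone (a : Fin n → Fin n → ℤ) : AddSubmonoid (Fin n → ℤ) :=
  AddSubmonoid.closure (Set.range (simpleRoot a))

theorem fundWt_nonneg (i : Fin n) : 0 ≤ fundWt i := fun _ => Int.natCast_nonneg _

theorem fundWt_eq_single (i : Fin n) : fundWt i = Pi.single i 1 := by
  funext k
  simp [fundWt, Pi.single_apply]

theorem simpleRoot_mem_rootCone (j : Fin n) : simpleRoot a j ∈ rootCone a :=
  AddSubmonoid.subset_closure ⟨j, rfl⟩

theorem exists_nonneg_mulVec_of_mem_rootCone {β : Fin n → ℤ} (hβ : β ∈ rootCone a) :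
    ∃ c : Fin n → ℤ, 0 ≤ c ∧ Matrix.of a *ᵥ c = β := by
  induction hβ using AddSubmonoid.closure_induction with
  | mem β hβ =>
    obtain ⟨j, rfl⟩ := hβ
    refine ⟨Pi.single j 1, Pi.single_nonneg.2 zero_le_one, ?_⟩
    rw [Matrix.mulVec_single_one]
    rfl
  | zero => exact ⟨0, le_rfl, Matrix.mulVec_zero _⟩
  | add β γ _ _ hβ hγ =>
    obtain ⟨b, hb, rfl⟩ := hβ
    obtain ⟨c, hc, rfl⟩ := hγ
    exact ⟨b + c, add_nonneg hb hc, Matrix.mulVec_add _ _ _⟩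

theorem eq_zero_of_mem_rootCone_of_neg_mem (hdet : (Matrix.of a).det ≠ 0) {β : Fin n → ℤ}
    (hβ : β ∈ rootCone a) (hβ' : -β ∈ rootCone a) : β = 0 := by
  obtain ⟨b, hb, rfl⟩ := exists_nonneg_mulVec_of_mem_rootCone hβ
  obtain ⟨c, hc, hbc⟩ := exists_nonneg_mulVec_of_mem_rootCone hβ'
  have hsum : b + c = 0 := by
    refine Matrix.eq_zero_of_mulVec_eq_zero hdet ?_
    rw [Matrix.mulVec_add, hbc, add_neg_cancel]
  rw [((add_eq_zero_iff_of_nonneg hb hc).1 hsum).1, Matrix.mulVec_zero]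

end WeightLattice

section WeylGroup

open scoped Matrix

variable {n : ℕ} {a : Fin n → Fin n → ℤ} {W : Type*} [Group W]
  {σ : W →* Multiplicative (AddAut (Fin n → ℤ))}

theorem weyl_one_apply (x : Fin n → ℤ) : σ 1 x = x := by
  rw [map_one]
  rfl

theorem weyl_mul_apply (v w : W) (x : Fin n → ℤ) : σ (v * w) x = σ v (σ w x) := by
  rw [map_mul]
  rfl

theorem weyl_inv_apply_apply (w : W) (x : Fin n → ℤ) : σ w⁻¹ (σ w x) = x := by
  rw [← weyl_mul_apply, inv_mul_cancel, weyl_one_apply]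

theorem weyl_eq_of_forall_fundWt (hσ : Function.Injective σ) {v w : W}
    (h : ∀ i, σ v (fundWt i) = σ w (fundWt i)) : v = w := by
  refine hσ (Multiplicative.toAdd.injective (AddEquiv.ext fun x => ?_))
  have hx : x = ∑ i, x i • fundWt i := by
    simp only [fundWt_eq_single, ← Pi.single_smul, smul_eq_mul, mul_one, Finset.univ_sum_single]
  rw [hx]
  simp only [map_sum, map_zsmul, h]

-- The sum is fixed by every reflection `s i`, which forces its `i`-th coordinate to vanish.
theorem sum_weyl_apply_eq_zero [Fintype W] (ha_diag : ∀ i, a i i = 2) {s : Fin n → W}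
    (hs : ∀ i (μ : Fin n → ℤ), σ (s i) μ = fun k => μ k - μ i * a k i) (x : Fin n → ℤ) :
    ∑ w, σ w x = 0 := by
  funext i
  have hfix : σ (s i) (∑ w, σ w x) = ∑ w, σ w x := by
    rw [map_sum]
    simp only [← weyl_mul_apply]
    exact Equiv.sum_comp (Equiv.mulLeft (s i)) fun w => σ w x
  have hi := congrFun hfix i
  rw [hs] at hi
  simp only [ha_diag] at hi
  simp only [Pi.zero_apply]
  linarith

-- A linear form killing all roots is constant on each orbit of a fundamental weight, hence kills
-- that weight because the orbit sums to zero.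
theorem det_cartan_ne_zero [Finite W] (ha_diag : ∀ i, a i i = 2) {s : Fin n → W}
    (hs : ∀ i (μ : Fin n → ℤ), σ (s i) μ = fun k => μ k - μ i * a k i)
    (hle : ∀ (w : W) (x : Fin n → ℤ), 0 ≤ x → x - σ w x ∈ rootCone a) :
    (Matrix.of a).det ≠ 0 := by
  have := Fintype.ofFinite W
  intro hdet
  obtain ⟨f, hf, hfa⟩ := Matrix.exists_vecMul_eq_zero_iff.2 hdet
  have horbit (w : W) (i : Fin n) : f ⬝ᵥ σ w (fundWt i) = f ⬝ᵥ fundWt i := by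
    obtain ⟨c, -, hc⟩ := exists_nonneg_mulVec_of_mem_rootCone (hle w _ (fundWt_nonneg i))
    have hzero : f ⬝ᵥ (fundWt i - σ w (fundWt i)) = 0 := by
      rw [← hc, Matrix.dotProduct_mulVec, hfa, zero_dotProduct]
    rw [dotProduct_sub, sub_eq_zero] at hzero
    exact hzero.symm
  refine hf (funext fun i => ?_)
  have hcard : (Fintype.card W : ℤ) * f i = 0 :=
    calc (Fintype.card W : ℤ) * f i = ∑ w : W, f ⬝ᵥ σ w (fundWt i) := by
          simp only [horbit, Finset.sum_const, Finset.card_univ, nsmul_eq_mul]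
          rw [fundWt_eq_single, dotProduct_single_one]
      _ = f ⬝ᵥ ∑ w : W, σ w (fundWt i) := (dotProduct_sum _ _ _).symm
      _ = 0 := by rw [sum_weyl_apply_eq_zero ha_diag hs, dotProduct_zero]
  simpa [Fintype.card_ne_zero] using hcard

variable (hdet : (Matrix.of a).det ≠ 0)
  (hle : ∀ (w : W) (x : Fin n → ℤ), 0 ≤ x → x - σ w x ∈ rootCone a)

include hdet hle

theorem weyl_apply_eq_self_of_le {x : Fin n → ℤ} (hx : 0 ≤ x) {w : W}
    (hw : σ w x - x ∈ rootCone a) : σ w x = x :=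
  sub_eq_zero.1 <| eq_zero_of_mem_rootCone_of_neg_mem hdet hw <| by
    rw [neg_sub]
    exact hle w x hx

theorem weyl_apply_eq_self_of_nonneg {x : Fin n → ℤ} (hx : 0 ≤ x) {w : W} (hwx : 0 ≤ σ w x) :
    σ w x = x := by
  refine weyl_apply_eq_self_of_le hdet hle hx ?_
  simpa only [weyl_inv_apply_apply] using hle w⁻¹ _ hwx

variable {w₀ : W} (hw₀ : ∀ x : Fin n → ℤ, 0 ≤ x → σ w₀ x ≤ 0)

include hw₀

theorem longest_mul_self (hσ : Function.Injective σ) : w₀ * w₀ = 1 := by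
  refine weyl_eq_of_forall_fundWt hσ fun i => ?_
  have hanti : 0 ≤ -σ w₀ (fundWt i) := neg_nonneg.2 (hw₀ _ (fundWt_nonneg i))
  have hdom : 0 ≤ σ (w₀ * w₀) (fundWt i) := by
    have hneg := hw₀ _ hanti
    rwa [map_neg, ← weyl_mul_apply, neg_nonpos] at hneg
  rw [weyl_one_apply, weyl_apply_eq_self_of_nonneg hdet hle (fundWt_nonneg i) hdom]

theorem weyl_apply_eq_longest_of_le {x : Fin n → ℤ} (hx : 0 ≤ x) {w : W}
    (hw : σ w₀ x - σ w x ∈ rootCone a) : σ w x = σ w₀ x := by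
  have hneg : σ (w * w₀⁻¹) (-σ w₀ x) = -σ w x := by
    rw [map_neg, weyl_mul_apply, weyl_inv_apply_apply]
  have heq := weyl_apply_eq_self_of_le hdet hle (w := w * w₀⁻¹)
    (neg_nonneg.2 (hw₀ x hx)) (by rwa [hneg, neg_sub_neg])
  rwa [hneg, neg_inj] at heq

end WeylGroup

theorem apply_mem_of_mem_adjoin {R A M : Type*} [CommSemiring R] [Semiring A] [Algebra R A]
    [AddCommMonoid M] [Module R M] (ρ : A →ₐ[R] Module.End R M) {N : Submodule R M} {s : Set A}
    (hs : ∀ y ∈ s, ∀ x ∈ N, ρ y x ∈ N) {y : A} (hy : y ∈ Algebra.adjoin R s) :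
    ∀ x ∈ N, ρ y x ∈ N := by
  induction hy using Algebra.adjoin_induction with
  | mem y hy => exact hs y hy
  | algebraMap r =>
    intro x hx
    rw [AlgHom.commutes, Module.algebraMap_end_apply]
    exact N.smul_mem r hx
  | add y z _ _ hy hz =>
    intro x hx
    rw [map_add, LinearMap.add_apply]
    exact add_mem (hy x hx) (hz x hx)
  | mul y z _ _ hy hz =>
    intro x hx
    rw [map_mul, Module.End.mul_apply]
    exact hy _ (hz x hx)

theorem zpow_injective_of_transcendental {R L : Type*} [CommRing R] [Nontrivial R] [Field L]
    [Algebra R L] {x : L} (hx : Transcendental R x) :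
    Function.Injective fun m : ℤ => x ^ m := by
  have hx0 : x ≠ 0 := by
    rintro rfl
    exact hx isAlgebraic_zero
  have hunit : ¬IsOfFinOrder (Units.mk0 x hx0) := by
    rw [isOfFinOrder_iff_pow_eq_one]
    rintro ⟨m, hm, hpow⟩
    have hpow' : x ^ m = 1 := by simpa using congrArg Units.val hpow
    exact hx (IsAlgebraic.of_pow hm (hpow' ▸ isAlgebraic_one))
  intro m k hmk
  exact injective_zpow_iff_not_isOfFinOrder.2 hunit (Units.ext (by simpa using hmk))

theorem ne_zero_of_zpow_injective {G₀ : Type*} [GroupWithZero G₀] {x : G₀}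
    (hx : Function.Injective fun m : ℤ => x ^ m) : x ≠ 0 := by
  rintro rfl
  exact absurd (@hx 1 2 (by simp)) (by decide)

section WeightModules

variable {q : ℂ} {n : ℕ} {d : Fin n → ℕ} {U : Type} [Ring U] [Algebra ℂ U] {K : Fin n → Uˣ}
  {M : Type} [AddCommGroup M] [Module ℂ M] {ρ : U →ₐ[ℂ] Module.End ℂ M}

theorem mem_wtSp {μ : Fin n → ℤ} {x : M} :
    x ∈ wtSp q d K ρ μ ↔ ∀ i, ρ (K i : U) x = q ^ (μ i * (d i : ℤ)) • x := by
  simp [wtSp, Submodule.mem_iInf, sub_eq_zero]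

theorem wtSp_iSupIndep (hq : Function.Injective fun m : ℤ => q ^ m) (hd : ∀ i, 0 < d i)
    (hK : ∀ i j, (K i : U) * (K j : U) = (K j : U) * (K i : U)) :
    iSupIndep (wtSp q d K ρ) := by
  have hgen := Module.End.independent_iInf_maxGenEigenspace_of_forall_mapsTo
    (fun i => ρ (K i : U)) fun i j φ => Module.End.mapsTo_maxGenEigenspace_of_comm
      (Commute.map (hK j i) ρ) φ
  have hchar : Function.Injective fun (μ : Fin n → ℤ) (i : Fin n) => q ^ (μ i * (d i : ℤ)) :=
    fun μ ν h => funext fun i =>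
      mul_right_cancel₀ (Int.natCast_ne_zero.2 (hd i).ne') (hq (congrFun h i))
  refine (hgen.comp hchar).mono fun μ => iInf_mono fun i x hx => ?_
  exact (Module.End.mem_maxGenEigenspace _ _ _).2 ⟨1, by simpa using hx⟩

theorem map_K_inv_of_mem_wtSp (hq0 : q ≠ 0) {μ : Fin n → ℤ} {x : M} (hx : x ∈ wtSp q d K ρ μ)
    (i : Fin n) : ρ ((K i)⁻¹ : Uˣ) x = (q ^ (μ i * (d i : ℤ)))⁻¹ • x := by
  rw [eq_inv_smul_iff₀ (zpow_ne_zero _ hq0), ← map_smul, ← mem_wtSp.1 hx i,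
    ← Module.End.mul_apply, ← map_mul, Units.inv_mul, map_one, Module.End.one_apply]

/-- `e` is a homogeneous element of weight `γ = ∑ γ i ϖ i` for the conjugation action of the
`K i`. -/
def IsWeightElem (q : ℂ) {n : ℕ} (d : Fin n → ℕ) {U : Type} [Ring U] [Algebra ℂ U]
    (K : Fin n → Uˣ) (γ : Fin n → ℤ) (e : U) : Prop :=
  ∀ i, (K i : U) * e = q ^ (γ i * (d i : ℤ)) • (e * (K i : U))

theorem IsWeightElem.map_mem_wtSp (hq0 : q ≠ 0) {γ μ : Fin n → ℤ} {e : U}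
    (he : IsWeightElem q d K γ e) {x : M} (hx : x ∈ wtSp q d K ρ μ) :
    ρ e x ∈ wtSp q d K ρ (μ + γ) := by
  rw [mem_wtSp] at hx ⊢
  intro i
  rw [← Module.End.mul_apply, ← map_mul, he i, map_smul, map_mul, LinearMap.smul_apply,
    Module.End.mul_apply, hx, map_smul, smul_smul, ← zpow_add₀ hq0, Pi.add_apply, add_mul,
    add_comm]

/-- The sum of the weight spaces of a `U_q(𝔤)`-module whose weights lie in `S`. -/
noncomputable def wtSum (q : ℂ) {n : ℕ} (d : Fin n → ℕ) {U : Type} [Ring U] [Algebra ℂ U]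
    (K : Fin n → Uˣ) {M : Type} [AddCommGroup M] [Module ℂ M] (ρ : U →ₐ[ℂ] Module.End ℂ M)
    (S : Set (Fin n → ℤ)) : Submodule ℂ M :=
  ⨆ μ ∈ S, wtSp q d K ρ μ

theorem wtSp_le_wtSum {S : Set (Fin n → ℤ)} {μ : Fin n → ℤ} (hμ : μ ∈ S) :
    wtSp q d K ρ μ ≤ wtSum q d K ρ S :=
  le_iSup₂_of_le μ hμ le_rfl

theorem mem_of_wtSum_eq_top (hind : iSupIndep (wtSp q d K ρ)) {S : Set (Fin n → ℤ)}
    (hS : wtSum q d K ρ S = ⊤) {μ : Fin n → ℤ} (hμ : wtSp q d K ρ μ ≠ ⊥) : μ ∈ S := by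
  by_contra hμS
  have hdisj : Disjoint (wtSp q d K ρ μ) (wtSum q d K ρ S) := hind.disjoint_biSup hμS
  rw [hS, disjoint_top] at hdisj
  exact hμ hdisj

theorem inDualWt.eq_zero_of_mem_wtSum {μ : Fin n → ℤ} {ξ : Module.Dual ℂ M}
    (hξ : inDualWt q d K ρ μ ξ) {S : Set (Fin n → ℤ)} (hμ : -μ ∉ S) {x : M}
    (hx : x ∈ wtSum q d K ρ S) : ξ x = 0 := by
  have hker : wtSum q d K ρ S ≤ LinearMap.ker ξ :=
    iSup₂_le fun ν hν y hy => hξ ν (fun h => hμ (h ▸ hν)) y hy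
  exact hker hx

theorem demazure_le_wtSum (hq0 : q ≠ 0) {e : Fin n → U} {γ : Fin n → Fin n → ℤ}
    (he : ∀ j, IsWeightElem q d K (γ j) (e j)) {S : Set (Fin n → ℤ)}
    (hS : ∀ μ ∈ S, ∀ j, μ + γ j ∈ S) {ν : Fin n → ℤ} (hν : ν ∈ S) :
    demazure q d (Set.range e) K ρ ν ≤ wtSum q d K ρ S := by
  have hstable : ∀ y ∈ Set.range e, ∀ x ∈ wtSum q d K ρ S, ρ y x ∈ wtSum q d K ρ S := by
    rintro _ ⟨j, rfl⟩
    have hmap : wtSum q d K ρ S ≤ (wtSum q d K ρ S).comap (ρ (e j)) :=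
      iSup₂_le fun μ hμ x hx => wtSp_le_wtSum (hS μ hμ j) ((he j).map_mem_wtSp hq0 hx)
    exact hmap
  refine Submodule.span_le.2 ?_
  rintro _ ⟨y, hy, u, hu, rfl⟩
  exact apply_mem_of_mem_adjoin ρ hstable hy u (wtSp_le_wtSum hν hu)

end WeightModules

section QuantisedEnvelopingAlgebra

variable {q : ℂ} {n : ℕ} {a : Fin n → Fin n → ℤ} {d : Fin n → ℕ} {U : Type} [Ring U] [Algebra ℂ U]
  {E F : Fin n → U} {K : Fin n → Uˣ}

theorem UqRels.isWeightElem_E (hrel : UqRels q a d U E F K) (j : Fin n) :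
    IsWeightElem q d K (simpleRoot a j) (E j) := fun i => by
  rw [hrel.2.1 i j, mul_comm]
  rfl

theorem UqRels.isWeightElem_F (hrel : UqRels q a d U E F K) (j : Fin n) :
    IsWeightElem q d K (-simpleRoot a j) (F j) := fun i => by
  rw [hrel.2.2.1 i j, mul_comm, ← neg_mul]
  rfl

/-- The generators `E i`, `F i`, `K i` and `(K i)⁻¹` of `U_q(𝔤)`. -/
def uqGenerators (E F : Fin n → U) (K : Fin n → Uˣ) : Set U :=
  {u | ∃ i, u = E i ∨ u = F i ∨ u = K i ∨ u = ((K i)⁻¹ : Uˣ)}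

-- The inclusion of the subalgebra generated by the generators has a section by universality.
theorem adjoin_uqGenerators_eq_top (hrel : UqRels q a d U E F K)
    (huniv : ∀ (B : Type) [Ring B] [Algebra ℂ B] (E' F' : Fin n → B) (K' : Fin n → Bˣ),
      UqRels q a d B E' F' K' → ∃! φ : U →ₐ[ℂ] B,
        (∀ i, φ (E i) = E' i) ∧ (∀ i, φ (F i) = F' i) ∧ (∀ i, φ (K i : U) = (K' i : B))) :
    Algebra.adjoin ℂ (uqGenerators E F K) = ⊤ := by
  set S := Algebra.adjoin ℂ (uqGenerators E F K)
  let E' (i : Fin n) : S := ⟨E i, Algebra.subset_adjoin ⟨i, by simp⟩⟩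
  let F' (i : Fin n) : S := ⟨F i, Algebra.subset_adjoin ⟨i, by simp⟩⟩
  let K' (i : Fin n) : Sˣ :=
    ⟨⟨K i, Algebra.subset_adjoin ⟨i, by simp⟩⟩,
      ⟨((K i)⁻¹ : Uˣ), Algebra.subset_adjoin ⟨i, by simp⟩⟩,
      Subtype.ext (K i).mul_inv, Subtype.ext (K i).inv_mul⟩
  have hrel' : UqRels q a d S E' F' K' := by
    obtain ⟨hKK, hKE, hKF, hEF, hserreE, hserreF⟩ := hrel
    refine ⟨fun i j => Subtype.ext (hKK i j), fun i j => Subtype.ext (hKE i j),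
      fun i j => Subtype.ext (hKF i j), fun i j => Subtype.ext ?_,
      fun i j hij => Subtype.ext ?_, fun i j hij => Subtype.ext ?_⟩
    · rw [apply_ite Subtype.val]
      exact hEF i j
    · push_cast
      exact hserreE i j hij
    · push_cast
      exact hserreF i j hij
  obtain ⟨φ, ⟨hφE, hφF, hφK⟩, -⟩ := huniv S E' F' K' hrel'
  have hsection : S.val.comp φ = AlgHom.id ℂ U :=
    (huniv U E F K hrel).unique
      ⟨fun i => congrArg S.val (hφE i), fun i => congrArg S.val (hφF i),
        fun i => congrArg S.val (hφK i)⟩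
      ⟨fun _ => rfl, fun _ => rfl, fun _ => rfl⟩
  refine Algebra.eq_top_iff.2 fun u => ?_
  rw [← AlgHom.id_apply (R := ℂ) u, ← hsection]
  exact (φ u).2

variable {M : Type} [AddCommGroup M] [Module ℂ M] {ρ : U →ₐ[ℂ] Module.End ℂ M}

theorem demazure_E_le_wtSum (hq0 : q ≠ 0) (hrel : UqRels q a d U E F K) (ν : Fin n → ℤ) :
    demazure q d (Set.range E) K ρ ν ≤ wtSum q d K ρ {μ | μ - ν ∈ rootCone a} :=
  demazure_le_wtSum hq0 hrel.isWeightElem_E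
    (fun μ hμ j => by
      simpa only [Set.mem_ofPred_eq, add_sub_right_comm] using
        add_mem (Set.mem_ofPred.1 hμ) (simpleRoot_mem_rootCone j))
    (by simp)

theorem demazure_F_le_wtSum (hq0 : q ≠ 0) (hrel : UqRels q a d U E F K) (ν : Fin n → ℤ) :
    demazure q d (Set.range F) K ρ ν ≤ wtSum q d K ρ {μ | ν - μ ∈ rootCone a} :=
  demazure_le_wtSum hq0 hrel.isWeightElem_F
    (fun μ hμ j => by
      simpa only [Set.mem_ofPred_eq, ← sub_eq_add_neg, sub_sub_eq_add_sub, add_sub_right_comm] using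
        add_mem (Set.mem_ofPred.1 hμ) (simpleRoot_mem_rootCone j))
    (by simp)

theorem UqRels.E_F_sub_F_E_mem_span (hq0 : q ≠ 0) (hrel : UqRels q a d U E F K)
    {μ : Fin n → ℤ} {x : M} (hx : x ∈ wtSp q d K ρ μ) (i j : Fin n) :
    ρ (E i) (ρ (F j) x) - ρ (F j) (ρ (E i) x) ∈ Submodule.span ℂ {x} := by
  have hcomm := congrArg (fun u => ρ u x) (hrel.2.2.2.1 i j)
  simp only [map_sub, map_mul, LinearMap.sub_apply, Module.End.mul_apply] at hcomm
  rw [hcomm]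
  have hmem (c : ℂ) : c • x ∈ Submodule.span ℂ {x} :=
    Submodule.smul_mem _ c (Submodule.mem_span_singleton_self x)
  split_ifs
  · rw [map_smul, map_sub, LinearMap.smul_apply, LinearMap.sub_apply, mem_wtSp.1 hx,
      map_K_inv_of_mem_wtSp hq0 hx]
    exact Submodule.smul_mem _ _ (sub_mem (hmem _) (hmem _))
  · rw [map_zero]
    exact zero_mem _

/-- The vector `F_{i₁} ⋯ F_{iₖ} v` attached to a word `i₁ … iₖ`; for a highest weight vector `v`
these vectors span the `U_q(𝔤)`-submodule generated by `v`. -/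
def loweringVec (F : Fin n → U) (ρ : U →ₐ[ℂ] Module.End ℂ M) (v : M) (l : List (Fin n)) : M :=
  l.foldr (fun i x => ρ (F i) x) v

theorem loweringVec_mem_wtSp (hq0 : q ≠ 0) (hrel : UqRels q a d U E F K) {lam : Fin n → ℤ} {v : M}
    (hv : v ∈ wtSp q d K ρ lam) (l : List (Fin n)) :
    loweringVec F ρ v l ∈ wtSp q d K ρ (lam - (l.map (simpleRoot a)).sum) := by
  induction l with
  | nil => simpa [loweringVec] using hv
  | cons i l ih =>
    rw [List.map_cons, List.sum_cons, add_comm, ← sub_sub, sub_eq_add_neg _ (simpleRoot a i)]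
    exact (hrel.isWeightElem_F i).map_mem_wtSp hq0 ih

theorem span_loweringVec_le_wtSum (hq0 : q ≠ 0) (hrel : UqRels q a d U E F K) {lam : Fin n → ℤ}
    {v : M} (hv : v ∈ wtSp q d K ρ lam) :
    Submodule.span ℂ (Set.range (loweringVec F ρ v)) ≤
      wtSum q d K ρ {μ | lam - μ ∈ rootCone a} := by
  refine Submodule.span_le.2 ?_
  rintro _ ⟨l, rfl⟩
  refine wtSp_le_wtSum ?_ (loweringVec_mem_wtSp hq0 hrel hv l)
  rw [Set.mem_ofPred_eq, sub_sub_cancel]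
  refine AddSubmonoid.list_sum_mem _ fun β hβ => ?_
  obtain ⟨j, -, rfl⟩ := List.mem_map.1 hβ
  exact simpleRoot_mem_rootCone j

theorem map_F_mem_span_loweringVec {v x : M} (i : Fin n)
    (hx : x ∈ Submodule.span ℂ (Set.range (loweringVec F ρ v))) :
    ρ (F i) x ∈ Submodule.span ℂ (Set.range (loweringVec F ρ v)) := by
  induction hx using Submodule.span_induction with
  | mem x hx =>
    obtain ⟨l, rfl⟩ := hx
    exact Submodule.subset_span ⟨i :: l, rfl⟩
  | zero => simp
  | add x y _ _ hx hy => simpa only [map_add] using add_mem hx hy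
  | smul c x _ hx => simpa only [map_smul] using Submodule.smul_mem _ c hx

theorem map_E_loweringVec_mem_span (hq0 : q ≠ 0) (hrel : UqRels q a d U E F K)
    {lam : Fin n → ℤ} {v : M} (hv : v ∈ wtSp q d K ρ lam) (hEv : ∀ i, ρ (E i) v = 0)
    (i : Fin n) (l : List (Fin n)) :
    ρ (E i) (loweringVec F ρ v l) ∈ Submodule.span ℂ (Set.range (loweringVec F ρ v)) := by
  induction l with
  | nil => simp [loweringVec, hEv]
  | cons j l ih =>
    have hcomm := hrel.E_F_sub_F_E_mem_span hq0 (loweringVec_mem_wtSp hq0 hrel hv l) i j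
    have hspan : Submodule.span ℂ {loweringVec F ρ v l} ≤
        Submodule.span ℂ (Set.range (loweringVec F ρ v)) :=
      Submodule.span_mono (Set.singleton_subset_iff.2 ⟨l, rfl⟩)
    exact (Submodule.sub_mem_iff_left _ (map_F_mem_span_loweringVec j ih)).1 (hspan hcomm)

theorem map_mem_span_loweringVec (hq0 : q ≠ 0) (hrel : UqRels q a d U E F K)
    (hgen : Algebra.adjoin ℂ (uqGenerators E F K) = ⊤)
    {lam : Fin n → ℤ} {v : M} (hv : v ∈ wtSp q d K ρ lam) (hEv : ∀ i, ρ (E i) v = 0) (u : U) :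
    ∀ x ∈ Submodule.span ℂ (Set.range (loweringVec F ρ v)),
      ρ u x ∈ Submodule.span ℂ (Set.range (loweringVec F ρ v)) := by
  set N := Submodule.span ℂ (Set.range (loweringVec F ρ v))
  have hword (l : List (Fin n)) : loweringVec F ρ v l ∈ N := Submodule.subset_span ⟨l, rfl⟩
  refine apply_mem_of_mem_adjoin ρ (s := uqGenerators E F K) (fun y hy => ?_)
    (hgen ▸ Algebra.mem_top)
  suffices hle : N ≤ N.comap (ρ y) from hle
  refine Submodule.span_le.2 ?_
  rintro _ ⟨l, rfl⟩
  have hwt := loweringVec_mem_wtSp hq0 hrel hv l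
  rw [SetLike.mem_coe, Submodule.mem_comap]
  obtain ⟨i, rfl | rfl | rfl | rfl⟩ := hy
  · exact map_E_loweringVec_mem_span hq0 hrel hv hEv i l
  · exact map_F_mem_span_loweringVec i (hword l)
  · rw [mem_wtSp.1 hwt i]
    exact N.smul_mem _ (hword l)
  · rw [map_K_inv_of_mem_wtSp hq0 hwt i]
    exact N.smul_mem _ (hword l)

theorem highestWt_sub_mem_rootCone (hq : Function.Injective fun m : ℤ => q ^ m)
    (hd : ∀ i, 0 < d i) (hrel : UqRels q a d U E F K)
    (hgen : Algebra.adjoin ℂ (uqGenerators E F K) = ⊤)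
    (hsimple : ∀ N : Submodule ℂ M, (∀ (u : U), ∀ x ∈ N, ρ u x ∈ N) → N = ⊥ ∨ N = ⊤)
    {lam : Fin n → ℤ} {v : M} (hv0 : v ≠ 0) (hv : v ∈ wtSp q d K ρ lam)
    (hEv : ∀ i, ρ (E i) v = 0) {μ : Fin n → ℤ} (hμ : wtSp q d K ρ μ ≠ ⊥) :
    lam - μ ∈ rootCone a := by
  have hq0 := ne_zero_of_zpow_injective hq
  have hvN : v ∈ Submodule.span ℂ (Set.range (loweringVec F ρ v)) :=
    Submodule.subset_span ⟨[], rfl⟩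
  have hspan := (hsimple _ (map_mem_span_loweringVec hq0 hrel hgen hv hEv)).resolve_left
    fun hbot => hv0 ((Submodule.mem_bot ℂ).1 (hbot ▸ hvN))
  have htop : wtSum q d K ρ {μ | lam - μ ∈ rootCone a} = ⊤ :=
    top_le_iff.1 (hspan ▸ span_loweringVec_le_wtSum hq0 hrel hv)
  exact mem_of_wtSum_eq_top (wtSp_iSupIndep hq hd hrel.1) htop hμ

end QuantisedEnvelopingAlgebra

section CoordinateRing

variable {q : ℂ} {n : ℕ} {a : Fin n → Fin n → ℤ} {d : Fin n → ℕ} {U : Type} [Ring U] [Algebra ℂ U]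
  {E F : Fin n → U} {K : Fin n → Uˣ} {W : Type} [Group W]
  {σ : W →* Multiplicative (AddAut (Fin n → ℤ))} {w₀ : W}
  {V : (Fin n → ℕ) → Type} [∀ c, AddCommGroup (V c)] [∀ c, Module ℂ (V c)]
  {ρ : ∀ c, U →ₐ[ℂ] Module.End ℂ (V c)} {A : Type} [Ring A]
  (cf : ∀ c : Fin n → ℕ, Module.Dual ℂ (V c) → V c → A)

theorem weyl_sub_mem_rootCone (hq : Function.Injective fun m : ℤ => q ^ m) (hd : ∀ i, 0 < d i)
    (hrel : UqRels q a d U E F K) (hgen : Algebra.adjoin ℂ (uqGenerators E F K) = ⊤)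
    (hsimple : ∀ c (N : Submodule ℂ (V c)), (∀ (u : U), ∀ v ∈ N, ρ c u v ∈ N) → N = ⊥ ∨ N = ⊤)
    (hhw : ∀ c, ∃ v : V c, v ≠ 0 ∧ v ∈ wtSp q d K (ρ c) (fun i => (c i : ℤ)) ∧
      ∀ i, ρ c (E i) v = 0)
    (hextremal : ∀ c (w : W), wtSp q d K (ρ c) (σ w (fun i => (c i : ℤ))) ≠ ⊥)
    (w : W) (x : Fin n → ℤ) (hx : 0 ≤ x) : x - σ w x ∈ rootCone a := by
  lift x to Fin n → ℕ using hx
  obtain ⟨v, hv0, hv, hEv⟩ := hhw x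
  exact highestWt_sub_mem_rootCone hq hd hrel hgen (hsimple x) hv0 hv hEv (hextremal x w)

theorem cf_mem_Qplus (hq0 : q ≠ 0) (hrel : UqRels q a d U E F K) {w : W} {i : Fin n}
    (hw : σ w₀ (fundWt i) - σ w (fundWt i) ∉ rootCone a)
    {ξ : Module.Dual ℂ (V (Pi.single i 1))}
    (hξ : inDualWt q d K (ρ (Pi.single i 1)) (-σ w₀ (fundWt i)) ξ)
    {v : V (Pi.single i 1)} (hv : v ∈ wtSp q d K (ρ (Pi.single i 1)) (fundWt i)) :
    cf (Pi.single i 1) ξ v ∈ Qplus q d E K ρ σ cf w := by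
  refine TwoSidedIdeal.subset_span ⟨i, ξ, v, hv, fun y hy => ?_, rfl⟩
  refine hξ.eq_zero_of_mem_wtSum ?_ (demazure_E_le_wtSum hq0 hrel _ hy)
  rwa [neg_neg]

theorem cf_mem_Qminus (hq0 : q ≠ 0) (hrel : UqRels q a d U E F K) {w : W} {i : Fin n}
    (hw : σ (w * w₀) (fundWt i) - fundWt i ∉ rootCone a)
    {ξ : Module.Dual ℂ (V (Pi.single i 1))}
    (hξ : inDualWt q d K (ρ (Pi.single i 1)) (-fundWt i) ξ)
    {v : V (Pi.single i 1)} (hv : v ∈ wtSp q d K (ρ (Pi.single i 1)) (σ w₀ (fundWt i))) :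
    cf (Pi.single i 1) ξ v ∈ Qminus q d F K ρ σ w₀ cf w := by
  refine TwoSidedIdeal.subset_span ⟨i, ξ, v, hv, fun y hy => ?_, rfl⟩
  refine hξ.eq_zero_of_mem_wtSum ?_ (demazure_F_le_wtSum hq0 hrel _ hy)
  rwa [neg_neg]

end CoordinateRing

theorem Q_contains_generator_general
    (q : ℂ) (hq : Function.Injective fun m : ℤ => q ^ m)
    (n : ℕ) (a : Fin n → Fin n → ℤ) (d : Fin n → ℕ)
    (ha_diag : ∀ i, a i i = 2) (hd_pos : ∀ i, 0 < d i)
    (U : Type) [Ring U] [Algebra ℂ U] (E F : Fin n → U) (K : Fin n → Uˣ)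
    (hrel : UqRels q a d U E F K) (hgen : Algebra.adjoin ℂ (uqGenerators E F K) = ⊤)
    (W : Type) [Group W] [Finite W] (σ : W →* Multiplicative (AddAut (Fin n → ℤ)))
    (hσinj : Function.Injective σ)
    (s : Fin n → W) (hs : ∀ i (μ : Fin n → ℤ), σ (s i) μ = fun k => μ k - μ i * a k i)
    (w₀ : W) (hw₀ : ∀ μ : Fin n → ℤ, 0 ≤ μ → σ w₀ μ ≤ 0)
    (V : (Fin n → ℕ) → Type) [∀ c, AddCommGroup (V c)] [∀ c, Module ℂ (V c)]
    (ρ : ∀ c, U →ₐ[ℂ] Module.End ℂ (V c))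
    (hsimple : ∀ c (N : Submodule ℂ (V c)), (∀ (u : U), ∀ v ∈ N, ρ c u v ∈ N) → N = ⊥ ∨ N = ⊤)
    (hhw : ∀ c, ∃ v : V c, v ≠ 0 ∧ v ∈ wtSp q d K (ρ c) (fun i => (c i : ℤ)) ∧
      ∀ i, ρ c (E i) v = 0)
    (hextremal : ∀ c (w : W), wtSp q d K (ρ c) (σ w (fun i => (c i : ℤ))) ≠ ⊥)
    (A : Type) [Ring A] [Algebra ℂ A] (ι : A →ₗ[ℂ] (U →ₗ[ℂ] ℂ))
    (cf : ∀ c : Fin n → ℕ, Module.Dual ℂ (V c) → V c → A)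
    (hcf : ∀ c ξ v u, ι (cf c ξ v) u = ξ (ρ c u v))
    (wp wm : W) (hne : (wp, wm) ≠ (w₀, w₀)) :
    ∃ i : Fin n,
      (∀ (ξ : Module.Dual ℂ (V (Pi.single i 1))) (v : V (Pi.single i 1)),
        inDualWt q d K (ρ (Pi.single i 1)) (-fundWt i) ξ →
        v ∈ wtSp q d K (ρ (Pi.single i 1)) (σ w₀ (fundWt i)) →
        cf (Pi.single i 1) ξ v ∈ Qplus q d E K ρ σ cf wp ⊔ Qminus q d F K ρ σ w₀ cf wm) ∨
      (∀ (ξ : Module.Dual ℂ (V (Pi.single i 1))) (v : V (Pi.single i 1)),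
        inDualWt q d K (ρ (Pi.single i 1)) (-σ w₀ (fundWt i)) ξ →
        v ∈ wtSp q d K (ρ (Pi.single i 1)) (fundWt i) →
        cf (Pi.single i 1) ξ v ∈ Qplus q d E K ρ σ cf wp ⊔ Qminus q d F K ρ σ w₀ cf wm) := by
  have hq0 := ne_zero_of_zpow_injective hq
  have hle := weyl_sub_mem_rootCone hq hd_pos hrel hgen hsimple hhw hextremal
  have hdet := det_cartan_ne_zero ha_diag hs hle
  by_cases hp : wp = w₀
  · have hm : wm * w₀ ≠ 1 := fun h =>
      hne (Prod.ext hp (mul_right_cancel (h.trans (longest_mul_self hdet hle hw₀ hσinj).symm)))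
    obtain ⟨i, hi⟩ : ∃ i, σ (wm * w₀) (fundWt i) ≠ fundWt i := by
      contrapose! hm
      exact weyl_eq_of_forall_fundWt hσinj fun i => (hm i).trans (weyl_one_apply _).symm
    have hcone := mt (weyl_apply_eq_self_of_le hdet hle (fundWt_nonneg i)) hi
    exact ⟨i, Or.inl fun ξ v hξ hv => (le_sup_right : _ ≤ Qplus q d E K ρ σ cf wp ⊔ _)
      (cf_mem_Qminus cf hq0 hrel hcone hξ hv)⟩
  · obtain ⟨i, hi⟩ : ∃ i, σ wp (fundWt i) ≠ σ w₀ (fundWt i) := by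
      contrapose! hp
      exact weyl_eq_of_forall_fundWt hσinj hp
    have hcone := mt (weyl_apply_eq_longest_of_le hdet hle hw₀ (fundWt_nonneg i)) hi
    exact ⟨i, Or.inr fun ξ v hξ hv => (le_sup_left : _ ≤ _ ⊔ Qminus q d F K ρ σ w₀ cf wm)
      (cf_mem_Qplus cf hq0 hrel hcone hξ hv)⟩

theorem Q_contains_generator
    -- the deformation parameter: a transcendental complex number
    (q : ℂ) (hq : Transcendental ℚ q)
    -- Cartan data of the complex semisimple Lie algebra 𝔤 of rank n
    (n : ℕ) (hn : 0 < n) (a : Fin n → Fin n → ℤ) (d : Fin n → ℕ)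
    (ha_diag : ∀ i, a i i = 2) (ha_off : ∀ i j, i ≠ j → a i j ≤ 0)
    (ha_zero : ∀ i j, a i j = 0 ↔ a j i = 0)
    (hd_pos : ∀ i, 0 < d i)
    (ha_symm : ∀ i j, (d i : ℤ) * a i j = (d j : ℤ) * a j i)
    -- the quantised enveloping algebra U = U_q(𝔤): carries elements E i, F i and units K i
    -- satisfying the defining relations, and is universal for these relations
    (U : Type) [Ring U] [Algebra ℂ U]
    (E F : Fin n → U) (K : Fin n → Uˣ)
    (hrel : UqRels q a d U E F K)
    (hUuniv : ∀ (B : Type) [Ring B] [Algebra ℂ B] (E' F' : Fin n → B) (K' : Fin n → Bˣ),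
      UqRels q a d B E' F' K' → ∃! φ : U →ₐ[ℂ] B,
        (∀ i, φ (E i) = E' i) ∧ (∀ i, φ (F i) = F' i) ∧ (∀ i, φ (K i : U) = (K' i : B)))
    -- the Hopf algebra structure of U_q(𝔤)
    (Δ : U →ₐ[ℂ] U ⊗[ℂ] U) (ε : U →ₐ[ℂ] ℂ)
    (hΔE : ∀ i, Δ (E i) = E i ⊗ₜ 1 + (K i : U) ⊗ₜ E i)
    (hΔF : ∀ i, Δ (F i) = F i ⊗ₜ (((K i)⁻¹ : Uˣ) : U) + 1 ⊗ₜ F i)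
    (hΔK : ∀ i, Δ (K i : U) = (K i : U) ⊗ₜ (K i : U))
    (hεE : ∀ i, ε (E i) = 0) (hεF : ∀ i, ε (F i) = 0) (hεK : ∀ i, ε (K i : U) = 1)
    -- the Weyl group W, acting faithfully on the weight lattice P = ℤⁿ (coordinates taken in
    -- the basis of fundamental weights ϖ i), generated by the simple reflections s i, with
    -- longest element w₀ (characterised by: w₀ maps dominant weights to antidominant ones)
    (W : Type) [Group W] [Finite W] (σ : W →* Multiplicative (AddAut (Fin n → ℤ)))
    (hσinj : Function.Injective σ)
    (s : Fin n → W) (hsgen : Subgroup.closure (Set.range s) = ⊤)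
    (hs : ∀ i (μ : Fin n → ℤ), σ (s i) μ = fun k => μ k - μ i * a k i)
    (w₀ : W) (hw₀ : ∀ μ : Fin n → ℤ, (∀ i, 0 ≤ μ i) → ∀ i, σ w₀ μ i ≤ 0)
    -- the simple finite-dimensional modules V(λ) of highest weight λ = ∑ c i ϖ i ∈ P⁺
    (V : (Fin n → ℕ) → Type) [∀ c, AddCommGroup (V c)] [∀ c, Module ℂ (V c)]
    (ρ : ∀ c, U →ₐ[ℂ] Module.End ℂ (V c))
    (hfd : ∀ c, FiniteDimensional ℂ (V c))
    (hsimple : ∀ c (N : Submodule ℂ (V c)), (∀ (u : U), ∀ v ∈ N, ρ c u v ∈ N) → N = ⊥ ∨ N = ⊤)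
    (hhw : ∀ c, ∃ v : V c, v ≠ 0 ∧ v ∈ wtSp q d K (ρ c) (fun i => (c i : ℤ)) ∧
      ∀ i, ρ c (E i) v = 0)
    (hwtsum : ∀ c, (⨆ μ : Fin n → ℤ, wtSp q d K (ρ c) μ) = ⊤)
    (hextremal : ∀ c (w : W),
      Module.finrank ℂ (wtSp q d K (ρ c) (σ w (fun i => (c i : ℤ)))) = 1)
    -- the quantised coordinate ring A = O_q(G): an algebra of linear forms on U (via the
    -- injection ι into the dual space, multiplication being convolution through Δ),
    -- generated by the coordinate functions cf c ξ v = c^λ_{ξ,v} : u ↦ ξ (u · v)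
    (A : Type) [Ring A] [Algebra ℂ A]
    (ι : A →ₗ[ℂ] (U →ₗ[ℂ] ℂ)) (hιinj : Function.Injective ι)
    (hι1 : ι 1 = ε.toLinearMap)
    (hιmul : ∀ x y : A, ι (x * y) =
      (TensorProduct.lid ℂ ℂ).toLinearMap ∘ₗ (TensorProduct.map (ι x) (ι y)) ∘ₗ Δ.toLinearMap)
    (cf : ∀ c : Fin n → ℕ, Module.Dual ℂ (V c) → V c → A)
    (hcf : ∀ c ξ v u, ι (cf c ξ v) u = ξ (ρ c u v))
    (hAgen : Algebra.adjoin ℂ {x : A | ∃ c ξ v, x = cf c ξ v} = ⊤) :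
    -- every Q_{w₊,w₋} with (w₊,w₋) ≠ (w₀,w₀) contains one of the elements
    -- c^{ϖ_i}_{-ϖ_i, w₀ϖ_i} or one of the elements c^{ϖ_i}_{-w₀ϖ_i, ϖ_i}
    ∀ wp wm : W, (wp, wm) ≠ (w₀, w₀) →
      ∃ i : Fin n,
        (∀ (ξ : Module.Dual ℂ (V (Pi.single i 1))) (v : V (Pi.single i 1)),
          inDualWt q d K (ρ (Pi.single i 1)) (fun k => -((Pi.single i 1 : Fin n → ℕ) k : ℤ)) ξ → ξ ≠ 0 →
          v ∈ wtSp q d K (ρ (Pi.single i 1)) (σ w₀ (fun k => ((Pi.single i 1 : Fin n → ℕ) k : ℤ))) → v ≠ 0 →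
          cf (Pi.single i 1) ξ v ∈
            Qplus q d E K ρ σ cf wp ⊔ Qminus q d F K ρ σ w₀ cf wm) ∨
        (∀ (ξ : Module.Dual ℂ (V (Pi.single i 1))) (v : V (Pi.single i 1)),
          inDualWt q d K (ρ (Pi.single i 1)) (-(σ w₀ (fun k => ((Pi.single i 1 : Fin n → ℕ) k : ℤ)))) ξ → ξ ≠ 0 →
          v ∈ wtSp q d K (ρ (Pi.single i 1)) (fun k => ((Pi.single i 1 : Fin n → ℕ) k : ℤ)) → v ≠ 0 →
          cf (Pi.single i 1) ξ v ∈
            Qplus q d E K ρ σ cf wp ⊔ Qminus q d F K ρ σ w₀ cf wm) := by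
  intro wp wm hne
  have hextremal' (c : Fin n → ℕ) (w : W) :
      wtSp q d K (ρ c) (σ w fun i => (c i : ℤ)) ≠ ⊥ := fun hbot =>
    zero_ne_one ((finrank_bot ℂ (V c)).symm.trans (hbot ▸ hextremal c w))
  obtain ⟨i, hi⟩ := Q_contains_generator_general q (zpow_injective_of_transcendental hq) n a d
    ha_diag hd_pos U E F K hrel (adjoin_uqGenerators_eq_top hrel hUuniv) W σ hσinj s hs w₀ hw₀ V ρ
    hsimple hhw hextremal' A ι cf hcf wp wm hne
  exact ⟨i, hi.imp (fun h ξ v hξ _ hv _ => h ξ v hξ hv) fun h ξ v hξ _ hv _ => h ξ v hξ hv⟩
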